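/- Let D be a strongly connected digraph of order n ≥ 2. If d(x) + d(y) ≥ 2n − 1 for all pairs of nonadjacent vertices x and y of D, then D is Hamiltonian. -/

import Mathlib

/-!
Basic definitions for finite digraphs (no loops, no multiple arcs), where the arc
relation is `A : V → V → Prop`.  Paths and cycles are given as lists of (distinct)
vertices.
-/

variable {V : Type*}

/-- A (directed) path, given by the list of its vertices. -/
def IsPathOn (A : V → V → Prop) (l : List V) : Prop :=
  l ≠ [] ∧ l.Nodup ∧ l.Chain' A

/-- A (directed) cycle, given by the list of its vertices; its length (number of
arcs) equals the length of the list. -/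
def IsCycleOn (A : V → V → Prop) (l : List V) : Prop :=
  2 ≤ l.length ∧ l.Nodup ∧ l.Chain' A ∧
    ∀ a ∈ l.getLast?, ∀ b ∈ l.head?, A a b

/-- A directed path from `a` to `b`. -/
def IsPathFromTo (A : V → V → Prop) (l : List V) (a b : V) : Prop :=
  IsPathOn A l ∧ l.head? = some a ∧ l.getLast? = some b

/-- Out-degree `d⁺(x)`. -/
noncomputable def outDeg (A : V → V → Prop) (x : V) : ℕ := {y | A x y}.ncard

/-- In-degree `d⁻(x)`. -/
noncomputable def inDeg (A : V → V → Prop) (x : V) : ℕ := {y | A y x}.ncard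

/-- Degree `d(x) = d⁺(x) + d⁻(x)`. -/
noncomputable def deg (A : V → V → Prop) (x : V) : ℕ := outDeg A x + inDeg A x

/-- Out-degree into a set, `d⁺(x, S)`. -/
noncomputable def outDegOn (A : V → V → Prop) (x : V) (S : Set V) : ℕ :=
  {y ∈ S | A x y}.ncard

/-- In-degree from a set, `d⁻(x, S)`. -/
noncomputable def inDegOn (A : V → V → Prop) (x : V) (S : Set V) : ℕ :=
  {y ∈ S | A y x}.ncard

/-- Degree with respect to a set, `d(x, S) = d⁺(x, S) + d⁻(x, S)`. -/
noncomputable def degOn (A : V → V → Prop) (x : V) (S : Set V) : ℕ :=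
  outDegOn A x S + inDegOn A x S

/-- Two distinct vertices are adjacent if there is an arc between them in some
direction. -/
def DAdj (A : V → V → Prop) (x y : V) : Prop := A x y ∨ A y x

/-- `D` is `S`-strongly connected: between any two distinct vertices of `S` there
are directed paths in both directions. -/
def SetStronglyConnected (A : V → V → Prop) (S : Set V) : Prop :=
  ∀ x ∈ S, ∀ y ∈ S, x ≠ y → ∃ l, IsPathFromTo A l x y

/-- Strong connectivity. -/
def StronglyConnected (A : V → V → Prop) : Prop :=
  ∀ x y : V, x ≠ y → ∃ l, IsPathFromTo A l x y

/-- 2-strong connectivity: at least 3 vertices, and deleting any vertex leaves a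
strongly connected digraph. -/
def TwoStronglyConnected [Fintype V] (A : V → V → Prop) : Prop :=
  3 ≤ Fintype.card V ∧
    ∀ w x y : V, x ≠ w → y ≠ w → x ≠ y → ∃ l, IsPathFromTo A l x y ∧ w ∉ l

/-- Condition `A₀` for a set `Y` of vertices. -/
def CondA0 [Fintype V] (A : V → V → Prop) (Y : Set V) : Prop :=
  ∀ x ∈ Y, ∀ y ∈ Y, ∀ z ∈ Y,
    x ≠ y → x ≠ z → y ≠ z → ¬ DAdj A x y →
      (¬ A x z →
        deg A x + deg A y + outDeg A x + inDeg A z ≥ 3 * Fintype.card V - 2) ∧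
      (¬ A z x →
        deg A x + deg A y + inDeg A x + outDeg A z ≥ 3 * Fintype.card V - 2)

/-- A `C`-bypass: a path of length at least two whose end-vertices lie on the
cycle `c` and whose internal vertices avoid `c`. -/
def IsBypass (A : V → V → Prop) (c p : List V) : Prop :=
  IsPathOn A p ∧ 3 ≤ p.length ∧
    (∀ a ∈ p.head?, a ∈ c) ∧ (∀ b ∈ p.getLast?, b ∈ c) ∧
    ∀ v ∈ p.tail.dropLast, v ∉ c

/-- The vertex `y` can be inserted into the path `p`. -/
def CanInsert (A : V → V → Prop) (p : List V) (y : V) : Prop :=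
  ∃ i, ∃ h : i + 1 < p.length, A (p[i]'(Nat.lt_of_succ_lt h)) y ∧ A y (p[i+1]'h)

/-- A `(C, x)`-path: a path from a vertex `u` of the cycle `c` to `x`, meeting `c`
only in `u`. -/
def IsCtoXPath (A : V → V → Prop) (c l : List V) (u x : V) : Prop :=
  IsPathFromTo A l u x ∧ u ∈ c ∧ ∀ v ∈ l, v ∈ c → v = u

/-- An `(x, C)`-path: a path from `x` to a vertex `v` of the cycle `c`, meeting `c`
only in `v`. -/
def IsXtoCPath (A : V → V → Prop) (c l : List V) (x v : V) : Prop :=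
  IsPathFromTo A l x v ∧ v ∈ c ∧ ∀ w ∈ l, w ∈ c → w = v

/-!
Suppose a longest cycle `C` misses a vertex `y`. By strong connectivity there are walks outside `C`
from some vertex of `C` to `y` and from `y` to some vertex of `C`; among all such pairs of
attachments take one spanning a longest segment `P` of `C`, so that `C = P ++ T`, the first vertex
`b` of `P` is reached from `y` and the last vertex `a` of `P` leads to `y`. Now let `Q` be a longest
path from `b` to `a` with `P ⊆ Q ⊆ C`. If `Q` covers `C`, closing it through `y` gives a cycle
longer than `C`. Otherwise some `x ∈ T` is not on `Q`. By maximality `x` cannot be inserted into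
`Q`, `y` cannot be inserted into `P`, and no walk outside `C` joins `y` to `x` in either direction.
A vertex that cannot be inserted into a path with `k` vertices has at most `k + 1` arcs to and from
the path, so `C` contributes at most `2|C|` and its complement at most `2(n - |C|) - 2` to
`d(x) + d(y)`, whence `d(x) + d(y) ≤ 2n - 2`.
-/

theorem ncard_setOf_mem_list {l : List V} (hl : l.Nodup) : {v | v ∈ l}.ncard = l.length := by
  classical
  rw [← List.coe_toFinset, Set.ncard_coe_finset, List.toFinset_card_of_nodup hl]

theorem exists_longest_of_forall_nodup [Finite V] {p : List V → Prop}
    (hnodup : ∀ l, p l → l.Nodup) (hp : ∃ l, p l) :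
    ∃ l, p l ∧ ∀ l', p l' → l'.length ≤ l.length := by
  have := Fintype.ofFinite V
  have hfin : {l | p l}.Finite := (List.finite_length_le V (Fintype.card V)).subset
    fun l hl => (hnodup l hl).length_le_card
  exact Set.exists_max_image _ List.length hfin hp

variable {A : V → V → Prop} {a b c d x y : V} {l p q : List V} {S T : Set V}

section Paths

theorem IsPathFromTo.length_pos (h : IsPathFromTo A p a b) : 0 < p.length :=
  List.length_pos_iff.2 h.1.1

theorem IsPathFromTo.mem_left (h : IsPathFromTo A p a b) : a ∈ p :=
  List.mem_of_mem_head? h.2.1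

theorem IsPathFromTo.mem_right (h : IsPathFromTo A p a b) : b ∈ p :=
  List.mem_of_mem_getLast? h.2.2

theorem IsPathFromTo.append (hp : IsPathFromTo A p a b) (hq : IsPathFromTo A q c d) (hbc : A b c)
    (hdisj : p.Disjoint q) : IsPathFromTo A (p ++ q) a d := by
  obtain ⟨⟨hp₀, hp_nodup, hp_chain⟩, ha, hb⟩ := hp
  obtain ⟨⟨-, hq_nodup, hq_chain⟩, hc, hd⟩ := hq
  refine ⟨⟨List.append_ne_nil_of_left_ne_nil hp₀ q, hp_nodup.append hq_nodup hdisj,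
    hp_chain.append hq_chain ?_⟩, ?_, ?_⟩
  · simpa [hb, hc] using hbc
  · simp [List.head?_append, ha]
  · simp [List.getLast?_append, hd]

theorem isPathFromTo_singleton (A : V → V → Prop) (v : V) : IsPathFromTo A [v] v v :=
  ⟨⟨List.cons_ne_nil v [], List.nodup_singleton v, List.isChain_singleton v⟩, rfl, rfl⟩

theorem exists_isPathFromTo_of_isChain (hl : l.IsChain A) (ha : l.head? = some a)
    (hb : l.getLast? = some b) : ∃ p, IsPathFromTo A p a b ∧ p ⊆ l := by
  induction l generalizing a with
  | nil => simp at ha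
  | cons v l ih =>
    obtain rfl : v = a := by simpa using ha
    obtain rfl | hl₀ := eq_or_ne l []
    · obtain rfl : v = b := by simpa using hb
      exact ⟨[v], isPathFromTo_singleton A v, List.Subset.refl [v]⟩
    obtain ⟨p, hp, hpl⟩ := ih hl.tail (List.head?_eq_some_head hl₀)
      (by simpa [List.getLast?_cons, List.getLast?_eq_some_getLast hl₀] using hb)
    by_cases hv : v ∈ p
    · obtain ⟨s, t, rfl⟩ := List.append_of_mem hv
      obtain ⟨⟨-, hnodup, hchain⟩, -, hlast⟩ := hp
      refine ⟨v :: t, ⟨⟨by simp, hnodup.of_append_right, hchain.right_of_append⟩, rfl, ?_⟩, ?_⟩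
      · simpa using hlast
      · exact fun w hw => List.mem_cons_of_mem v (hpl (List.mem_append_right s hw))
    · exact ⟨[v] ++ p, (isPathFromTo_singleton A v).append hp
        (hl.rel_head? (List.head?_eq_some_head hl₀)) (List.singleton_disjoint.2 hv),
        List.cons_subset_cons v hpl⟩

end Paths

section Cycles

theorem isCycleOn_iff_cycleChain :
    IsCycleOn A l ↔ 2 ≤ l.length ∧ l.Nodup ∧ Cycle.Chain A (l : Cycle V) := by
  refine and_congr_right fun hlen => and_congr_right fun _ => ?_
  have hl : l ≠ [] := by rintro rfl; simp at hlen
  rw [Cycle.chain_ne_nil A hl, List.isChain_cons, List.getLast?_eq_some_getLast hl]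
  exact ⟨fun h => ⟨h.2 _ rfl, h.1⟩, fun h => ⟨h.2, fun _ ha => Option.some_inj.1 ha ▸ h.1⟩⟩

theorem IsCycleOn.of_isRotated (h : IsCycleOn A p) (hpq : p ~r q) : IsCycleOn A q := by
  rw [isCycleOn_iff_cycleChain] at h ⊢
  rwa [← hpq.perm.length_eq, ← hpq.nodup_iff, ← Cycle.coe_eq_coe.2 hpq]

theorem IsPathFromTo.isCycleOn (h : IsPathFromTo A p a b) (hab : a ≠ b) (hba : A b a) :
    IsCycleOn A p := by
  obtain ⟨⟨-, hnodup, hchain⟩, ha, hb⟩ := h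
  refine ⟨?_, hnodup, hchain, by simpa [ha, hb] using hba⟩
  match p with
  | [] => simp at ha
  | [v] => simp_all
  | _ :: _ :: _ => simp

theorem IsCycleOn.exists_isPathFromTo (h : IsCycleOn A l) :
    ∃ a b, IsPathFromTo A l a b ∧ a ≠ b ∧ A b a := by
  obtain ⟨hlen, hnodup, hchain, hclose⟩ := h
  match l with
  | v :: w :: l =>
    have hlast := List.getLast?_eq_some_getLast (List.cons_ne_nil w l)
    refine ⟨v, (w :: l).getLast (by simp), ⟨⟨by simp, hnodup, hchain⟩, rfl, hlast⟩, ?_,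
      hclose _ hlast v rfl⟩
    rintro heq
    exact (List.nodup_cons.1 hnodup).1 (heq ▸ List.getLast_mem _)

theorem StronglyConnected.exists_isCycleOn [Nontrivial V] (h : StronglyConnected A) :
    ∃ l, IsCycleOn A l := by
  obtain ⟨x, y, hxy⟩ := exists_pair_ne V
  obtain ⟨p, ⟨⟨-, hnodup, hchain⟩, hx, hy⟩⟩ := h x y hxy
  match p with
  | [] => simp at hx
  | [v] => simp_all
  | v :: w :: p =>
    have hvw : w ≠ v := by rintro rfl; simp at hnodup
    obtain ⟨q, hq⟩ := h w v hvw
    exact ⟨q, hq.isCycleOn hvw (List.isChain_cons_cons.1 hchain).1⟩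

/-- A cycle of maximum length. -/
def IsLongestCycle (A : V → V → Prop) (l : List V) : Prop :=
  IsCycleOn A l ∧ ∀ l', IsCycleOn A l' → l'.length ≤ l.length

theorem IsLongestCycle.of_isRotated (h : IsLongestCycle A p) (hpq : p ~r q) :
    IsLongestCycle A q :=
  ⟨h.1.of_isRotated hpq, hpq.perm.length_eq ▸ h.2⟩

theorem StronglyConnected.exists_isLongestCycle [Finite V] [Nontrivial V]
    (h : StronglyConnected A) : ∃ l, IsLongestCycle A l :=
  exists_longest_of_forall_nodup (fun _ hl => hl.2.1) h.exists_isCycleOn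

end Cycles

section Insertion

theorem not_canInsert_iff_isChain :
    ¬ CanInsert A p y ↔ p.IsChain fun u v => ¬ (A u y ∧ A y v) := by
  simp only [CanInsert, List.isChain_iff_getElem, not_exists]

theorem CanInsert.append_right (h : CanInsert A p y) (q : List V) : CanInsert A (p ++ q) y := by
  contrapose! h
  rw [not_canInsert_iff_isChain] at h ⊢
  exact h.left_of_append

theorem IsPathFromTo.exists_insert (hp : IsPathFromTo A p a b) (hy : y ∉ p)
    (h : CanInsert A p y) : ∃ q, IsPathFromTo A q a b ∧ q.Perm (y :: p) := by
  obtain ⟨s, u, v, t, rfl, huy, hyv⟩ : ∃ s u v t, p = s ++ u :: v :: t ∧ A u y ∧ A y v := by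
    contrapose! h
    rw [not_canInsert_iff_isChain, List.isChain_iff_forall_rel_of_append_cons_cons]
    exact fun u v s t hp huv => h s u v t hp huv.1 huv.2
  obtain ⟨⟨-, hnodup, hchain⟩, ha, hb⟩ := hp
  have hperm : (s ++ u :: y :: v :: t).Perm (y :: (s ++ u :: v :: t)) := by
    simpa using List.perm_middle (a := y) (l₁ := s ++ [u]) (l₂ := v :: t)
  refine ⟨s ++ u :: y :: v :: t, ⟨⟨by simp, ?_, ?_⟩, ?_, ?_⟩, hperm⟩
  · exact hperm.nodup_iff.2 (List.nodup_cons.2 ⟨hy, hnodup⟩)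
  · obtain ⟨hsu, -, hvt⟩ := List.isChain_append_cons_cons.1 hchain
    exact List.isChain_append_cons_cons.2 ⟨hsu, huy, hvt.cons_cons hyv⟩
  · simpa [List.head?_append] using ha
  · simpa using hb

theorem IsLongestCycle.not_canInsert (h : IsLongestCycle A l) (hy : y ∉ l) :
    ¬ CanInsert A l y := by
  intro hins
  obtain ⟨a, b, hl, hab, hba⟩ := h.1.exists_isPathFromTo
  obtain ⟨q, hq, hperm⟩ := hl.exists_insert hy hins
  have hlong := h.2 q (hq.isCycleOn hab hba)
  rw [hperm.length_eq, List.length_cons] at hlong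
  omega

theorem IsPathFromTo.exists_superset_forall_not_canInsert [Finite V] (hp : IsPathFromTo A p a b)
    (hpl : p ⊆ l) :
    ∃ q, IsPathFromTo A q a b ∧ p ⊆ q ∧ q ⊆ l ∧ ∀ x ∈ l, x ∉ q → ¬ CanInsert A q x := by
  obtain ⟨q, ⟨hq, hpq, hql⟩, hmax⟩ := exists_longest_of_forall_nodup
    (p := fun q => IsPathFromTo A q a b ∧ p ⊆ q ∧ q ⊆ l) (fun _ h => h.1.1.2.1)
    ⟨p, hp, List.Subset.refl p, hpl⟩
  refine ⟨q, hq, hpq, hql, fun x hxl hxq hins => ?_⟩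
  obtain ⟨r, hr, hperm⟩ := hq.exists_insert hxq hins
  have hqr : q ⊆ r := fun v hv => hperm.mem_iff.2 (List.mem_cons_of_mem x hv)
  have hrl : r ⊆ l := List.Subset.trans hperm.subset (List.cons_subset.2 ⟨hxl, hql⟩)
  have hlong := hmax r ⟨hr, List.Subset.trans hpq hqr, hrl⟩
  rw [hperm.length_eq, List.length_cons] at hlong
  omega

end Insertion

section Degrees

theorem degOn_univ (A : V → V → Prop) (x : V) : degOn A x Set.univ = deg A x := by
  simp [degOn, deg, outDegOn, inDegOn, outDeg, inDeg]

theorem outDegOn_union_le (A : V → V → Prop) (x : V) (S T : Set V) :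
    outDegOn A x (S ∪ T) ≤ outDegOn A x S + outDegOn A x T := by
  have hsep : {v ∈ S ∪ T | A x v} = {v ∈ S | A x v} ∪ {v ∈ T | A x v} :=
    Set.ext fun _ => or_and_right
  rw [outDegOn, hsep]
  exact Set.ncard_union_le _ _

theorem degOn_union_le (A : V → V → Prop) (x : V) (S T : Set V) :
    degOn A x (S ∪ T) ≤ degOn A x S + degOn A x T := by
  have hout := outDegOn_union_le A x S T
  have hin : inDegOn A x (S ∪ T) ≤ inDegOn A x S + inDegOn A x T :=
    outDegOn_union_le (flip A) x S T
  simp only [degOn]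
  omega

theorem deg_le_degOn_add_degOn_compl (A : V → V → Prop) (x : V) (S : Set V) :
    deg A x ≤ degOn A x S + degOn A x Sᶜ := by
  simpa only [Set.union_compl_self, degOn_univ] using degOn_union_le A x S Sᶜ

theorem degOn_le_degOn_add_degOn_diff (A : V → V → Prop) (x : V) (h : S ⊆ T) :
    degOn A x T ≤ degOn A x S + degOn A x (T \ S) := by
  simpa only [Set.union_sdiff_cancel h] using degOn_union_le A x S (T \ S)

theorem degOn_eq_zero_of_forall_not_dAdj (h : ∀ v ∈ S, ¬ DAdj A x v) : degOn A x S = 0 := by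
  have hout : {v ∈ S | A x v} = ∅ :=
    Set.sep_eq_empty_iff_mem_false.2 fun v hv hxv => h v hv (.inl hxv)
  have hin : {v ∈ S | A v x} = ∅ :=
    Set.sep_eq_empty_iff_mem_false.2 fun v hv hvx => h v hv (.inr hvx)
  simp [degOn, outDegOn, inDegOn, hout, hin]

theorem degOn_le_degOn_diff_singleton (hy : y ∈ S) (hxy : ¬ DAdj A x y) :
    degOn A x S ≤ degOn A x (S \ {y}) := by
  have hzero : degOn A x {y} = 0 := degOn_eq_zero_of_forall_not_dAdj (by simpa using hxy)
  simpa [hzero] using degOn_le_degOn_add_degOn_diff A x (Set.singleton_subset_iff.2 hy)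

theorem degOn_le_two_mul_ncard (hS : S.Finite) (x : V) : degOn A x S ≤ 2 * S.ncard := by
  have hout : outDegOn A x S ≤ S.ncard := Set.ncard_le_ncard (Set.sep_subset _ _) hS
  have hin : inDegOn A x S ≤ S.ncard := Set.ncard_le_ncard (Set.sep_subset _ _) hS
  simp only [degOn]
  omega

theorem outDegOn_add_inDegOn_le_ncard (hS : S.Finite) (h : ∀ v ∈ S, ¬ (A x v ∧ A v y)) :
    outDegOn A x S + inDegOn A y S ≤ S.ncard := by
  have hdisj : Disjoint {v ∈ S | A x v} {v ∈ S | A v y} :=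
    Set.disjoint_left.2 fun v hxv hvy => h v hxv.1 ⟨hxv.2, hvy.2⟩
  calc outDegOn A x S + inDegOn A y S
      = ({v ∈ S | A x v} ∪ {v ∈ S | A v y}).ncard :=
        (Set.ncard_union_eq hdisj (hS.subset (Set.sep_subset _ _))
          (hS.subset (Set.sep_subset _ _))).symm
    _ ≤ S.ncard :=
        Set.ncard_le_ncard (Set.union_subset (Set.sep_subset _ _) (Set.sep_subset _ _)) hS

theorem degOn_add_degOn_le_two_mul_ncard (hS : S.Finite)
    (hxy : ∀ v ∈ S, ¬ (A x v ∧ A v y)) (hyx : ∀ v ∈ S, ¬ (A y v ∧ A v x)) :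
    degOn A x S + degOn A y S ≤ 2 * S.ncard := by
  have hout := outDegOn_add_inDegOn_le_ncard hS hxy
  have hin := outDegOn_add_inDegOn_le_ncard hS hyx
  simp only [degOn]
  omega

theorem degOn_add_two_le_two_mul_ncard (hS : S.Finite) (hy : y ∈ S) (hxy : ¬ DAdj A x y) :
    degOn A x S + 2 ≤ 2 * S.ncard := by
  have hdiff := degOn_le_degOn_diff_singleton hy hxy
  have hle := degOn_le_two_mul_ncard (hS.sdiff (t := {y})) (A := A) x
  have hcard := Set.ncard_sdiff_singleton_add_one hy hS
  omega

theorem degOn_add_degOn_add_two_le_two_mul_ncard (hS : S.Finite) (hy : y ∈ S) (hyy : ¬ A y y)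
    (hadj : ¬ DAdj A x y) (hxy : ∀ v ∈ S, ¬ (A x v ∧ A v y)) (hyx : ∀ v ∈ S, ¬ (A y v ∧ A v x)) :
    degOn A x S + degOn A y S + 2 ≤ 2 * S.ncard := by
  have hx := degOn_le_degOn_diff_singleton hy hadj
  have hy' := degOn_le_degOn_diff_singleton hy (A := A) (x := y) (by simpa [DAdj] using hyy)
  have hle := degOn_add_degOn_le_two_mul_ncard (hS.sdiff (t := {y}))
    (fun v hv => hxy v hv.1) (fun v hv => hyx v hv.1)
  have hcard := Set.ncard_sdiff_singleton_add_one hy hS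
  omega

open Classical in
theorem outDegOn_singleton (A : V → V → Prop) (x y : V) :
    outDegOn A x {y} = if A x y then 1 else 0 := by
  split_ifs with h
  · exact Set.ncard_eq_one.2 ⟨y, Set.sep_eq_self_iff_mem_true.2 (by simpa using h)⟩
  · exact (congrArg Set.ncard (Set.sep_eq_empty_iff_mem_false.2 (by simpa using h))).trans
      (Set.ncard_empty V)

open Classical in
theorem inDegOn_singleton (A : V → V → Prop) (x y : V) :
    inDegOn A x {y} = if A y x then 1 else 0 :=
  outDegOn_singleton (flip A) x y

theorem degOn_setOf_mem_cons_le {u : V} (h : (u :: l).IsChain fun v w => ¬ (A v y ∧ A y w)) :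
    degOn A y {v | v ∈ u :: l} ≤ l.length + 1 + outDegOn A y {u} := by
  induction l generalizing u with
  | nil =>
    have hin : inDegOn A y {u} ≤ 1 := by rw [inDegOn_singleton]; split_ifs <;> simp
    simp only [List.mem_singleton, Set.ofPred_eq_eq_singleton, degOn, List.length_nil]
    omega
  | cons w l ih =>
    obtain ⟨huw, hl⟩ := List.isChain_cons_cons.1 h
    have hinsert : {v | v ∈ u :: w :: l} = {u} ∪ {v | v ∈ w :: l} := by
      ext v; simp [List.mem_cons]
    have hgap : inDegOn A y {u} + outDegOn A y {w} ≤ 1 := by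
      rw [inDegOn_singleton, outDegOn_singleton]
      split_ifs with hu hw
      · exact absurd ⟨hu, hw⟩ huw
      all_goals simp
    calc degOn A y {v | v ∈ u :: w :: l}
        ≤ degOn A y {u} + degOn A y {v | v ∈ w :: l} := hinsert ▸ degOn_union_le A y _ _
      _ ≤ (outDegOn A y {u} + inDegOn A y {u}) + (l.length + 1 + outDegOn A y {w}) :=
        Nat.add_le_add_left (ih hl) _
      _ ≤ (w :: l).length + 1 + outDegOn A y {u} := by rw [List.length_cons]; omega

theorem degOn_le_length_add_one_of_not_canInsert (h : ¬ CanInsert A p y) :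
    degOn A y {v | v ∈ p} ≤ p.length + 1 := by
  cases p with
  | nil => simp [degOn, outDegOn, inDegOn]
  | cons u l =>
    have hle := degOn_setOf_mem_cons_le (not_canInsert_iff_isChain.1 h)
    have hout : outDegOn A y {u} ≤ 1 := by rw [outDegOn_singleton]; split_ifs <;> simp
    rw [List.length_cons]
    omega

theorem degOn_add_length_lt_of_not_canInsert (hS : S.Finite) (hp : p.Nodup)
    (hpS : {v | v ∈ p} ⊆ S) (hxS : x ∈ S) (hxp : x ∉ p) (hxx : ¬ A x x) (h : ¬ CanInsert A p x) :
    degOn A x S + p.length < 2 * S.ncard := by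
  have hsplit := degOn_le_degOn_add_degOn_diff A x hpS
  have hon := degOn_le_length_add_one_of_not_canInsert h
  have hoff := degOn_add_two_le_two_mul_ncard (A := A) (x := x) (y := x)
    (hS.sdiff (t := {v | v ∈ p})) ⟨hxS, hxp⟩ (by simpa [DAdj] using hxx)
  have hcard := Set.ncard_sdiff_add_ncard_of_subset hpS hS
  rw [ncard_setOf_mem_list hp] at hcard
  omega

theorem degOn_le_length_add_one_of_forall_not_dAdj (hpS : {v | v ∈ p} ⊆ S)
    (hadj : ∀ v ∈ S, v ∉ p → ¬ DAdj A y v) (h : ¬ CanInsert A p y) :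
    degOn A y S ≤ p.length + 1 := by
  have hsplit := degOn_le_degOn_add_degOn_diff A y hpS
  have hon := degOn_le_length_add_one_of_not_canInsert h
  have hoff : degOn A y (S \ {v | v ∈ p}) = 0 :=
    degOn_eq_zero_of_forall_not_dAdj fun v hv => hadj v hv.1 hv.2
  omega

end Degrees

section WalkAvoiding

/-- There is a walk of positive length from `a` to `b` whose interior `s` avoids `S`. The ends may
or may not lie in `S`, so that for the vertex set `S` of a cycle `C` this covers both walks from
`C` to a vertex outside and walks back to `C`. -/
def WalkAvoiding (A : V → V → Prop) (S : Set V) (a b : V) : Prop :=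
  ∃ s : List V, (a :: (s ++ [b])).IsChain A ∧ ∀ v ∈ s, v ∉ S

theorem WalkAvoiding.of_adj (h : A a b) (S : Set V) : WalkAvoiding A S a b :=
  ⟨[], by simpa using h, by simp⟩

theorem WalkAvoiding.of_adj_of_adj (hay : A a y) (hyb : A y b) (hy : y ∉ S) :
    WalkAvoiding A S a b :=
  ⟨[y], by simp [hay, hyb], by simpa using hy⟩

theorem walkAvoiding_flip : WalkAvoiding (flip A) S b a ↔ WalkAvoiding A S a b := by
  suffices ∀ {A : V → V → Prop} {a b}, WalkAvoiding A S a b → WalkAvoiding (flip A) S b a from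
    ⟨this, this⟩
  rintro A a b ⟨s, hchain, hs⟩
  refine ⟨s.reverse, ?_, by simpa using hs⟩
  have hrev : (a :: (s ++ [b])).reverse.IsChain (flip A) := List.isChain_reverse.2 hchain
  simpa using hrev

theorem exists_walkAvoiding_of_isChain (hl : l.IsChain A) (hy : l.getLast? = some y)
    (hyS : y ∉ S) (hx : ∃ x ∈ l, x ∈ S) : ∃ a ∈ S, WalkAvoiding A S a y := by
  induction l with
  | nil => simp at hy
  | cons v l ih =>
    have hl₀ : l ≠ [] := by rintro rfl; simp_all
    have hy' : l.getLast? = some y := by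
      simpa [List.getLast?_cons, List.getLast?_eq_some_getLast hl₀] using hy
    by_cases hlS : ∃ x ∈ l, x ∈ S
    · exact ih hl.tail hy' hlS
    · push Not at hlS
      obtain ⟨s, rfl⟩ := List.getLast?_eq_some_iff.1 hy'
      have hvS : v ∈ S := by
        obtain ⟨x, hx, hxS⟩ := hx
        exact (List.mem_cons.1 hx).elim (· ▸ hxS) fun hx => absurd hxS (hlS x hx)
      exact ⟨v, hvS, s, hl, fun w hw => hlS w (List.mem_append_left _ hw)⟩

theorem StronglyConnected.exists_walkAvoiding_to (h : StronglyConnected A) (hS : S.Nonempty)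
    (hy : y ∉ S) : ∃ a ∈ S, WalkAvoiding A S a y := by
  obtain ⟨x, hx⟩ := hS
  obtain ⟨l, hl⟩ := h x y (by rintro rfl; exact hy hx)
  exact exists_walkAvoiding_of_isChain hl.1.2.2 hl.2.2 hy ⟨x, hl.mem_left, hx⟩

theorem IsPathFromTo.reverse (h : IsPathFromTo A p a b) : IsPathFromTo (flip A) p.reverse b a := by
  obtain ⟨⟨hp, hnodup, hchain⟩, ha, hb⟩ := h
  exact ⟨⟨by simpa using hp, List.nodup_reverse.2 hnodup, List.isChain_reverse.2 hchain⟩,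
    by simpa using hb, by simpa using ha⟩

theorem StronglyConnected.flip (h : StronglyConnected A) : StronglyConnected (flip A) :=
  fun x y hxy => let ⟨l, hl⟩ := h y x hxy.symm; ⟨l.reverse, hl.reverse⟩

theorem StronglyConnected.exists_walkAvoiding_from (h : StronglyConnected A) (hS : S.Nonempty)
    (hy : y ∉ S) : ∃ b ∈ S, WalkAvoiding A S y b := by
  simpa only [walkAvoiding_flip] using h.flip.exists_walkAvoiding_to hS hy

theorem IsPathFromTo.exists_longer_isCycleOn (hp : IsPathFromTo A p b a) (hpS : ∀ v ∈ p, v ∈ S)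
    (hay : WalkAvoiding A S a y) (hyb : WalkAvoiding A S y b) (hy : y ∉ S) :
    ∃ l, IsCycleOn A l ∧ p.length < l.length := by
  obtain ⟨s, has, hs⟩ := hay
  obtain ⟨t, htb, ht⟩ := hyb
  set w := s ++ y :: t with hw
  have hw₀ : w ≠ [] := by simp [hw]
  have hwS : ∀ v ∈ w, v ∉ S := by
    simp only [hw, List.mem_append, List.mem_cons]
    rintro v (hv | rfl | hv)
    exacts [hs v hv, hy, ht v hv]
  have hchain : (a :: (w ++ [b])).IsChain A := by
    simpa [hw] using List.IsChain.append_overlap (l₁ := a :: s) (l₂ := [y]) (l₃ := t ++ [b])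
      (by simpa using has) (by simpa using htb) (by simp)
  obtain ⟨hw_chain, -, hlink⟩ := List.isChain_append.1 hchain.tail
  obtain ⟨q, hq, hqw⟩ := exists_isPathFromTo_of_isChain hw_chain (List.head?_eq_some_head hw₀)
    (List.getLast?_eq_some_getLast hw₀)
  have hdisj : p.Disjoint q := fun v hvp hvq => hwS v (hqw hvq) (hpS v hvp)
  have haw : A a (w.head hw₀) := hchain.rel_head? (by
    simp [List.head?_append, List.head?_eq_some_head hw₀])
  have hwb : A (w.getLast hw₀) b := hlink _ (List.getLast?_eq_some_getLast hw₀) b rfl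
  refine ⟨p ++ q, (hp.append hq haw hdisj).isCycleOn ?_ hwb, ?_⟩
  · exact fun h => hdisj hp.mem_left (h ▸ hq.mem_right)
  · have := hq.length_pos
    rw [List.length_append]
    omega

end WalkAvoiding

section AnchoredSegment

/-- The cycle `l` is `p` followed by `q` up to rotation, the last vertex of the segment `p` leads to
`y`, and `y` leads to the first vertex of `p`, by walks outside the cycle. -/
structure IsAnchoredSegment (A : V → V → Prop) (l : List V) (y : V) (p q : List V) : Prop where
  isRotated : (p ++ q) ~r l
  exists_to : ∃ a ∈ p.getLast?, WalkAvoiding A {v | v ∈ l} a y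
  exists_from : ∃ b ∈ p.head?, WalkAvoiding A {v | v ∈ l} y b

theorem StronglyConnected.exists_isAnchoredSegment (h : StronglyConnected A) (hl : l ≠ [])
    (hy : y ∉ l) : ∃ p q, IsAnchoredSegment A l y p q := by
  have hS : {v | v ∈ l}.Nonempty := List.exists_mem_of_ne_nil l hl
  obtain ⟨a, ha, hay⟩ := h.exists_walkAvoiding_to hS hy
  obtain ⟨b, hb, hyb⟩ := h.exists_walkAvoiding_from hS hy
  obtain ⟨s, t, rfl⟩ := List.append_of_mem hb
  have hrot : (b :: t ++ s) ~r (s ++ b :: t) := List.isRotated_append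
  obtain ⟨p, q, hpq⟩ := List.append_of_mem (hrot.mem_iff.2 ha)
  refine ⟨p ++ [a], q, ?_, ⟨a, by simp, hay⟩, ⟨b, ?_, hyb⟩⟩
  · simpa [← hpq] using hrot
  · cases p <;> simp_all

theorem IsAnchoredSegment.exists_longer_of_walkAvoiding_to (h : IsAnchoredSegment A l y p q)
    (hx : x ∈ q) (hxy : WalkAvoiding A {v | v ∈ l} x y) :
    ∃ p' q', IsAnchoredSegment A l y p' q' ∧ p.length < p'.length := by
  obtain ⟨b, hb, hyb⟩ := h.exists_from
  obtain ⟨s, t, rfl⟩ := List.append_of_mem hx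
  refine ⟨p ++ s ++ [x], t, ⟨by simpa using h.isRotated, ⟨x, by simp, hxy⟩, b, ?_, hyb⟩, ?_⟩
  · rw [List.append_assoc, List.head?_append, hb]
    rfl
  · simp only [List.length_append, List.length_singleton]
    omega

theorem IsAnchoredSegment.exists_longer_of_walkAvoiding_from (h : IsAnchoredSegment A l y p q)
    (hx : x ∈ q) (hyx : WalkAvoiding A {v | v ∈ l} y x) :
    ∃ p' q', IsAnchoredSegment A l y p' q' ∧ p.length < p'.length := by
  obtain ⟨a, ha, hay⟩ := h.exists_to
  obtain ⟨s, t, rfl⟩ := List.append_of_mem hx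
  have hrot : (x :: t ++ (p ++ s)) ~r (p ++ s ++ x :: t) := List.isRotated_append
  refine ⟨x :: t ++ p, s, ⟨?_, ⟨a, ?_, hay⟩, x, rfl, hyx⟩, ?_⟩
  · simpa using hrot.trans (by simpa using h.isRotated)
  · rw [List.getLast?_append, ha]
    rfl
  · simp only [List.length_append, List.length_cons]
    omega

theorem IsAnchoredSegment.nodup (h : IsAnchoredSegment A l y p q) (hl : l.Nodup) : p.Nodup :=
  (h.isRotated.nodup_iff.2 hl).of_append_left

theorem IsAnchoredSegment.mem_iff (h : IsAnchoredSegment A l y p q) {v : V} :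
    v ∈ l ↔ v ∈ p ∨ v ∈ q := by
  rw [← h.isRotated.mem_iff, List.mem_append]

theorem StronglyConnected.exists_isAnchoredSegment_forall_not_walkAvoiding [Finite V]
    (h : StronglyConnected A) (hl₀ : l ≠ []) (hl : l.Nodup) (hy : y ∉ l) :
    ∃ p q, IsAnchoredSegment A l y p q ∧
      ∀ x ∈ q, ¬ WalkAvoiding A {v | v ∈ l} x y ∧ ¬ WalkAvoiding A {v | v ∈ l} y x := by
  obtain ⟨p, ⟨q, hpq⟩, hmax⟩ := exists_longest_of_forall_nodup
    (fun _ ⟨_, hp⟩ => hp.nodup hl) (h.exists_isAnchoredSegment hl₀ hy)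
  refine ⟨p, q, hpq, fun x hx => ⟨fun hxy => ?_, fun hyx => ?_⟩⟩
  · obtain ⟨p', q', hpq', hlt⟩ := hpq.exists_longer_of_walkAvoiding_to hx hxy
    exact (hmax p' ⟨q', hpq'⟩).not_gt hlt
  · obtain ⟨p', q', hpq', hlt⟩ := hpq.exists_longer_of_walkAvoiding_from hx hyx
    exact (hmax p' ⟨q', hpq'⟩).not_gt hlt

theorem IsLongestCycle.not_canInsert_of_isAnchoredSegment (hl : IsLongestCycle A l) (hy : y ∉ l)
    (h : IsAnchoredSegment A l y p q) : ¬ CanInsert A p y := fun hins =>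
  (hl.of_isRotated h.isRotated.symm).not_canInsert (mt h.isRotated.mem_iff.1 hy)
    (hins.append_right q)

theorem IsLongestCycle.exists_not_canInsert [Finite V] (hl : IsLongestCycle A l) (hy : y ∉ l)
    (h : IsAnchoredSegment A l y p q) :
    ∃ r, r.Nodup ∧ p ⊆ r ∧ r ⊆ l ∧ ∃ x ∈ l, x ∉ r ∧ ¬ CanInsert A r x := by
  obtain ⟨a, ha, hay⟩ := h.exists_to
  obtain ⟨b, hb, hyb⟩ := h.exists_from
  have hp₀ : p ≠ [] := by rintro rfl; simp at hb
  have hp : IsPathFromTo A p b a :=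
    ⟨⟨hp₀, h.nodup hl.1.2.1, (hl.1.of_isRotated h.isRotated.symm).2.2.1.left_of_append⟩, hb, ha⟩
  obtain ⟨r, hr, hpr, hrl, hins⟩ :=
    hp.exists_superset_forall_not_canInsert fun v hv => h.mem_iff.2 (.inl hv)
  refine ⟨r, hr.1.2.1, hpr, hrl, ?_⟩
  by_contra! hcover
  have hlr : l ⊆ r := fun v hv => by_contra fun hvr => hins v hv hvr (hcover v hv hvr)
  obtain ⟨l', hl', hlt⟩ := hr.exists_longer_isCycleOn (fun v hv => hrl hv) hay hyb hy
  have hlong := hl.2 l' hl'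
  have hlen := (hl.1.2.1.subperm hlr).length_le
  omega

end AnchoredSegment

theorem IsLongestCycle.exists_not_dAdj_deg_add_deg_le [Finite V] (hloops : ∀ v, ¬ A v v)
    (hconn : StronglyConnected A) (hl : IsLongestCycle A l) (hy : y ∉ l) :
    ∃ x, x ≠ y ∧ ¬ DAdj A x y ∧ deg A x + deg A y + 2 ≤ 2 * Nat.card V := by
  have hl₀ : l ≠ [] := List.ne_nil_of_length_pos (zero_lt_two.trans_le hl.1.1)
  obtain ⟨p, q, hpq, hwalk⟩ :=
    hconn.exists_isAnchoredSegment_forall_not_walkAvoiding hl₀ hl.1.2.1 hy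
  obtain ⟨r, hr, hpr, hrl, x, hxl, hxr, hxins⟩ := hl.exists_not_canInsert hy hpq
  have hadj : ∀ v ∈ q, ¬ DAdj A v y := fun v hv hvy =>
    hvy.elim (fun h => (hwalk v hv).1 (.of_adj h _)) fun h => (hwalk v hv).2 (.of_adj h _)
  have hq : ∀ v ∈ l, v ∉ p → v ∈ q := fun v hv hvp => (hpq.mem_iff.1 hv).resolve_left hvp
  have hxq : x ∈ q := hq x hxl fun hxp => hxr (hpr hxp)
  refine ⟨x, fun hxy => hy (hxy ▸ hxl), hadj x hxq, ?_⟩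
  set S := {v | v ∈ l}
  have hxS : degOn A x S + r.length < 2 * S.ncard :=
    degOn_add_length_lt_of_not_canInsert S.toFinite hr hrl hxl hxr (hloops x) hxins
  have hyS : degOn A y S ≤ p.length + 1 :=
    degOn_le_length_add_one_of_forall_not_dAdj (fun v hv => hpq.mem_iff.2 (.inl hv))
      (fun v hv hvp => mt Or.symm (hadj v (hq v hv hvp)))
      (hl.not_canInsert_of_isAnchoredSegment hy hpq)
  have hlen : p.length ≤ r.length := ((hpq.nodup hl.1.2.1).subperm hpr).length_le
  have hcompl : degOn A x Sᶜ + degOn A y Sᶜ + 2 ≤ 2 * Sᶜ.ncard :=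
    degOn_add_degOn_add_two_le_two_mul_ncard Sᶜ.toFinite hy (hloops y) (hadj x hxq)
      (fun v hv h => (hwalk x hxq).1 (.of_adj_of_adj h.1 h.2 hv))
      (fun v hv h => (hwalk x hxq).2 (.of_adj_of_adj h.1 h.2 hv))
  have hcard := Set.ncard_add_ncard_compl S
  have hx := deg_le_degOn_add_degOn_compl A x S
  have hy' := deg_le_degOn_add_degOn_compl A y S
  omega

/-- Meyniel's theorem. -/
theorem meyniel_hamiltonian [Fintype V] (A : V → V → Prop)
    (hloops : ∀ v, ¬ A v v)
    (hn : 2 ≤ Fintype.card V) (hconn : StronglyConnected A)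
    (hdeg : ∀ x y : V, x ≠ y → ¬ DAdj A x y →
      deg A x + deg A y ≥ 2 * Fintype.card V - 1) :
    ∃ l : List V, IsCycleOn A l ∧ ∀ v : V, v ∈ l := by
  have : Nontrivial V := Fintype.one_lt_card_iff_nontrivial.1 hn
  obtain ⟨l, hl⟩ := hconn.exists_isLongestCycle
  refine ⟨l, hl.1, fun y => ?_⟩
  by_contra hy
  obtain ⟨x, hxy, hadj, hle⟩ := hl.exists_not_dAdj_deg_add_deg_le hloops hconn hy
  have hge := hdeg x y hxy hadj
  rw [Nat.card_eq_fintype_card] at hle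
  omega
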